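/- Let ω ∈ ℂ with Im ω > 0 and ρ > 0. Then the function φ ↦ A(ρ, φ) := ∫_ℝ 𝒵(β, φ) e^{iωρ cosh β} dβ is differentiable at every φ₀ ∈ (0, 2π) \ {φ₊, φ₋}, and its derivative is given by the integration-by-parts formula ∂_φ A(ρ, φ₀) = −ωρ ∫_ℝ 𝒵(β, φ₀) sinh β · e^{iωρ cosh β} dβ. -/

import Mathlib

/-!
The kernel is a signed sum of four terms `coth ((β + i (c - φ)) / 4)`, one for each
`c = π ± α, -π ± α`, and the statement is additive over them. For a single term the poles
lie on `sin ((c - φ) / 4) = 0`; away from this set, `‖sinh (x + iy)‖² = sinh² x + sin² y`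
bounds both `coth` and its derivative `-1 / sinh²` by `1 / sin² y`, uniformly in `β` and locally
uniformly in `φ`. The weight `e^{iωρ cosh β}` has modulus `e^{-k cosh β}` with
`k = ρ Im ω > 0`, which dominates everything, including the factor `sinh β`. Hence
differentiation under the integral sign is justified (`cothTerm_hasDerivAt_integral`), and as
`∂_φ = -i ∂_β` on a function of `β - iφ`, the derivative is moved onto the weight because the
integral over `ℝ` of an integrable derivative of an integrable function vanishes. The hypotheses
on `φ₀` keep all four terms away from their poles.
-/

open Real MeasureTheory Set Filter

/-- Complex hyperbolic cotangent. -/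
noncomputable def ccoth (z : ℂ) : ℂ := Complex.cosh z / Complex.sinh z

/-- The function `U` from the Sommerfeld kernel construction. -/
noncomputable def Ufun (α : ℝ) (ζ : ℂ) : ℂ :=
  ccoth ((1/4 : ℂ) * (ζ - Complex.I * (π/2 : ℝ) + Complex.I * (α : ℝ))) -
  ccoth ((1/4 : ℂ) * (ζ - Complex.I * (π/2 : ℝ) - Complex.I * (α : ℝ)))

/-- The function `Z`. -/
noncomputable def Zfun (α : ℝ) (z : ℂ) : ℂ :=
  -Ufun α (z - Complex.I * (π/2 : ℝ)) + Ufun α (z - Complex.I * (5*π/2 : ℝ))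

/-- The Sommerfeld-type kernel `𝒵(β, φ) = Z(β + 2πi − iφ)`. -/
noncomputable def Zker (α : ℝ) (β φ : ℝ) : ℂ :=
  Zfun α ((β : ℂ) + 2*(π : ℝ)*Complex.I - Complex.I * (φ : ℝ))


/-! ### The weight and its decay -/

/-- The weight `e^{iωρ cosh β}`. -/
noncomputable def sommerfeldWeight (ω : ℂ) (ρ : ℝ) (β : ℝ) : ℂ :=
  Complex.exp (Complex.I * ω * (ρ : ℂ) * (Real.cosh β : ℂ))

/-- The argument `(β + i (c - φ)) / 4` of one of the hyperbolic cotangents in the kernel. -/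
noncomputable def cothArg (c β φ : ℝ) : ℂ := (1/4 : ℂ) * ((β : ℂ) + Complex.I * ((c - φ : ℝ) : ℂ))

lemma sommerfeldWeight_norm (ω : ℂ) (ρ β : ℝ) :
    ‖sommerfeldWeight ω ρ β‖ = Real.exp (-(ρ * ω.im) * Real.cosh β) := by
  rw [sommerfeldWeight, Complex.norm_exp]
  congr 1
  rw [Complex.re_mul_ofReal, Complex.re_mul_ofReal, Complex.I_mul_re]
  ring

lemma sommerfeldWeight_hasDerivAt (ω : ℂ) (ρ β : ℝ) :
    HasDerivAt (sommerfeldWeight ω ρ)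
      (sommerfeldWeight ω ρ β * (Complex.I * ω * (ρ : ℂ) * (Real.sinh β : ℂ))) β := by
  have h := (Real.hasDerivAt_cosh β).ofReal_comp
  exact (h.const_mul (Complex.I * ω * (ρ : ℂ))).cexp

lemma sommerfeldWeight_continuous (ω : ℂ) (ρ : ℝ) : Continuous (sommerfeldWeight ω ρ) :=
  continuous_iff_continuousAt.2 fun β => (sommerfeldWeight_hasDerivAt ω ρ β).continuousAt

lemma integrable_exp_neg_mul_cosh {k : ℝ} (hk : 0 < k) :
    Integrable fun β : ℝ => Real.exp (-k * Real.cosh β) := by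
  refine (integrable_exp_neg_mul_sq (b := k / 2) (by positivity)).mono'
    (by fun_prop) (ae_of_all _ fun β => ?_)
  rw [Real.norm_eq_abs, Real.abs_exp, Real.exp_le_exp]
  have h1 : β ^ 2 / 2 ≤ Real.cosh β := by
    have h := Real.self_le_sinh_iff (x := |β| / 2) |>.2 (by positivity)
    have h2 : Real.cosh β = 1 + 2 * Real.sinh (|β| / 2) ^ 2 := by
      rw [← Real.cosh_abs, show |β| = 2 * (|β| / 2) by ring, Real.cosh_two_mul,
        Real.cosh_sq]
      ring_nf
    have h3 : (|β| / 2) ^ 2 ≤ Real.sinh (|β| / 2) ^ 2 := by gcongr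
    rw [div_pow, sq_abs] at h3
    linarith
  nlinarith

lemma sommerfeldWeight_integrable {ω : ℂ} (hω : 0 < ω.im) {ρ : ℝ} (hρ : 0 < ρ) :
    Integrable (sommerfeldWeight ω ρ) := by
  refine (integrable_exp_neg_mul_cosh (mul_pos hρ hω)).mono'
    (sommerfeldWeight_continuous ω ρ).aestronglyMeasurable (ae_of_all _ fun β => ?_)
  rw [sommerfeldWeight_norm]

lemma sinh_mul_sommerfeldWeight_integrable {ω : ℂ} (hω : 0 < ω.im) {ρ : ℝ} (hρ : 0 < ρ) :
    Integrable fun β : ℝ => (Real.sinh β : ℂ) * sommerfeldWeight ω ρ β := by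
  have hk : 0 < ρ * ω.im := mul_pos hρ hω
  refine ((integrable_exp_neg_mul_cosh (half_pos hk)).const_mul (2 / (ρ * ω.im))).mono'
    ((Complex.continuous_ofReal.comp Real.continuous_sinh).mul
      (sommerfeldWeight_continuous ω ρ)).aestronglyMeasurable (ae_of_all _ fun β => ?_)
  rw [norm_mul, sommerfeldWeight_norm, Complex.norm_real, Real.norm_eq_abs]
  set k := ρ * ω.im
  have h1 : |Real.sinh β| ≤ Real.cosh β := by
    apply abs_le_of_sq_le_sq _ (Real.cosh_pos β).le
    rw [Real.cosh_sq]; linarith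
  -- `cosh β ≤ (2 / k) e^{(k / 2) cosh β}` costs half of the exponential decay.
  have h2 : Real.cosh β ≤ 2 / k * Real.exp (k / 2 * Real.cosh β) := by
    have := Real.add_one_le_exp (k / 2 * Real.cosh β)
    rw [div_mul_eq_mul_div, le_div_iff₀ hk]
    linarith
  calc |Real.sinh β| * Real.exp (-k * Real.cosh β)
      ≤ (2 / k * Real.exp (k / 2 * Real.cosh β)) * Real.exp (-k * Real.cosh β) := by
        gcongr; exact h1.trans h2
    _ = 2 / k * Real.exp (-(k / 2) * Real.cosh β) := by
        rw [mul_assoc, ← Real.exp_add]; ring_nf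

/-! ### A single hyperbolic cotangent: bounds and derivatives -/

lemma ccoth_hasDerivAt {z : ℂ} (hz : Complex.sinh z ≠ 0) :
    HasDerivAt ccoth (-1 / Complex.sinh z ^ 2) z := by
  refine ((Complex.hasDerivAt_cosh z).div (Complex.hasDerivAt_sinh z) hz).congr_deriv ?_
  congr 1
  linear_combination -(Complex.cosh_sq_sub_sinh_sq z)

lemma norm_sinh_cothArg_sq (c β φ : ℝ) :
    ‖Complex.sinh (cothArg c β φ)‖ ^ 2 =
      Real.sinh (β / 4) ^ 2 + Real.sin ((c - φ) / 4) ^ 2 := by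
  have h : cothArg c β φ = ((β / 4 : ℝ) : ℂ) + (((c - φ) / 4 : ℝ) : ℂ) * Complex.I := by
    simp only [cothArg]; push_cast; ring
  rw [h, Complex.sinh_add, Complex.sinh_mul_I, Complex.cosh_mul_I, ← Complex.normSq_eq_norm_sq,
    Complex.normSq_apply]
  simp only [← Complex.ofReal_sin, ← Complex.ofReal_cos, ← Complex.ofReal_sinh,
    ← Complex.ofReal_cosh]
  simp [-Complex.ofReal_sin, -Complex.ofReal_cos, -Complex.ofReal_sinh, -Complex.ofReal_cosh]
  have h1 := Real.cosh_sq (β / 4)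
  have h2 := Real.sin_sq_add_cos_sq ((c - φ) / 4)
  linear_combination (Real.sin ((c - φ) / 4))^2 * h1 + Real.sinh (β / 4) ^ 2 * h2

lemma norm_cosh_cothArg_sq (c β φ : ℝ) :
    ‖Complex.cosh (cothArg c β φ)‖ ^ 2 =
      Real.sinh (β / 4) ^ 2 + Real.cos ((c - φ) / 4) ^ 2 := by
  have h : cothArg c β φ = ((β / 4 : ℝ) : ℂ) + (((c - φ) / 4 : ℝ) : ℂ) * Complex.I := by
    simp only [cothArg]; push_cast; ring
  rw [h, Complex.cosh_add, Complex.sinh_mul_I, Complex.cosh_mul_I, ← Complex.normSq_eq_norm_sq,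
    Complex.normSq_apply]
  simp only [← Complex.ofReal_sin, ← Complex.ofReal_cos, ← Complex.ofReal_sinh,
    ← Complex.ofReal_cosh]
  simp [-Complex.ofReal_sin, -Complex.ofReal_cos, -Complex.ofReal_sinh, -Complex.ofReal_cosh]
  have h1 := Real.cosh_sq (β / 4)
  have h2 := Real.sin_sq_add_cos_sq ((c - φ) / 4)
  linear_combination (Real.cos ((c - φ) / 4))^2 * h1 + Real.sinh (β / 4) ^ 2 * h2

lemma sinh_cothArg_ne_zero {c β φ : ℝ} (h : Real.sin ((c - φ) / 4) ≠ 0) :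
    Complex.sinh (cothArg c β φ) ≠ 0 := by
  intro h0
  have h1 := norm_sinh_cothArg_sq c β φ
  rw [h0, norm_zero] at h1
  have : 0 < Real.sin ((c - φ) / 4) ^ 2 := by positivity
  nlinarith [sq_nonneg (Real.sinh (β / 4))]

lemma norm_inv_sinh_cothArg_sq_le {c β φ s : ℝ} (hs : 0 < s)
    (h : s ≤ Real.sin ((c - φ) / 4) ^ 2) :
    ‖-1 / Complex.sinh (cothArg c β φ) ^ 2‖ ≤ 1 / s := by
  rw [norm_div, norm_neg, norm_one, norm_pow, norm_sinh_cothArg_sq]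
  gcongr
  nlinarith [sq_nonneg (Real.sinh (β / 4))]

lemma norm_ccoth_cothArg_le {c φ : ℝ} (h : Real.sin ((c - φ) / 4) ≠ 0) (β : ℝ) :
    ‖ccoth (cothArg c β φ)‖ ≤ 1 / |Real.sin ((c - φ) / 4)| := by
  have h0 : 0 < Real.sin ((c - φ) / 4) ^ 2 := by positivity
  have h2 := Real.sin_sq_add_cos_sq ((c - φ) / 4)
  refine le_of_sq_le_sq ?_ (by positivity)
  rw [ccoth, norm_div, div_pow, norm_sinh_cothArg_sq, norm_cosh_cothArg_sq, div_pow, sq_abs,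
    one_pow, div_le_div_iff₀ (by positivity) h0]
  nlinarith [mul_nonneg (sq_nonneg (Real.sinh (β / 4))) (sq_nonneg (Real.cos ((c - φ) / 4))),
    sq_nonneg (Real.cos ((c - φ) / 4)), sq_nonneg (Real.sinh (β / 4))]

lemma ccoth_cothArg_hasDerivAt_beta {c β φ : ℝ} (h : Real.sin ((c - φ) / 4) ≠ 0) :
    HasDerivAt (fun β : ℝ => ccoth (cothArg c β φ))
      (-1 / Complex.sinh (cothArg c β φ) ^ 2 * (1/4)) β := by
  have h1 : HasDerivAt (fun β : ℝ => cothArg c β φ) (1/4) β := by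
    simpa [cothArg] using
      ((hasDerivAt_id β).ofReal_comp.add_const (Complex.I * ((c - φ : ℝ) : ℂ))).const_mul (1/4 : ℂ)
  exact (ccoth_hasDerivAt (sinh_cothArg_ne_zero h)).comp β h1

lemma ccoth_cothArg_hasDerivAt_phi {c β φ : ℝ} (h : Real.sin ((c - φ) / 4) ≠ 0) :
    HasDerivAt (fun φ : ℝ => ccoth (cothArg c β φ))
      (-1 / Complex.sinh (cothArg c β φ) ^ 2 * (-Complex.I/4)) φ := by
  have h1 : HasDerivAt (fun φ : ℝ => cothArg c β φ) (-Complex.I/4) φ := by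
    refine (((((hasDerivAt_id φ).const_sub c).ofReal_comp.const_mul Complex.I).const_add
      (β : ℂ)).const_mul (1/4 : ℂ)).congr_deriv ?_
    push_cast
    ring
  exact (ccoth_hasDerivAt (sinh_cothArg_ne_zero h)).comp φ h1

lemma ccoth_cothArg_continuous {c φ : ℝ} (h : Real.sin ((c - φ) / 4) ≠ 0) :
    Continuous fun β : ℝ => ccoth (cothArg c β φ) :=
  continuous_iff_continuousAt.2 fun _ => (ccoth_cothArg_hasDerivAt_beta h).continuousAt

lemma ccoth_mul_integrable {c φ : ℝ} (h : Real.sin ((c - φ) / 4) ≠ 0) {f : ℝ → ℂ}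
    (hf : Integrable f) : Integrable fun β : ℝ => ccoth (cothArg c β φ) * f β :=
  hf.bdd_mul (ccoth_cothArg_continuous h).aestronglyMeasurable
    (ae_of_all _ (norm_ccoth_cothArg_le h))

lemma continuous_inv_sinh_cothArg_sq {c φ : ℝ} (h : Real.sin ((c - φ) / 4) ≠ 0) :
    Continuous fun β : ℝ => -1 / Complex.sinh (cothArg c β φ) ^ 2 := by
  refine continuous_const.div ?_ fun β => pow_ne_zero 2 (sinh_cothArg_ne_zero h)
  unfold cothArg
  fun_prop

lemma inv_sinh_sq_mul_integrable {c φ : ℝ} (h : Real.sin ((c - φ) / 4) ≠ 0) {f : ℝ → ℂ}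
    (hf : Integrable f) :
    Integrable fun β : ℝ => -1 / Complex.sinh (cothArg c β φ) ^ 2 * f β :=
  hf.bdd_mul (continuous_inv_sinh_cothArg_sq h).aestronglyMeasurable
    (ae_of_all _ fun _ => norm_inv_sinh_cothArg_sq_le (pow_pos (abs_pos.2 h) 2) (sq_abs _).le)

/-! ### Differentiating the integral of a single term -/

/-- Integration by parts in `β`; the factor `-1 / sinh²` is `4 ∂_β coth`. -/
lemma integral_inv_sinh_sq_mul {ω : ℂ} (hω : 0 < ω.im) {ρ : ℝ} (hρ : 0 < ρ) {c φ : ℝ}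
    (h : Real.sin ((c - φ) / 4) ≠ 0) :
    ∫ β : ℝ, -1 / Complex.sinh (cothArg c β φ) ^ 2 * sommerfeldWeight ω ρ β =
      -(4 * Complex.I * ω * ρ) *
        ∫ β : ℝ, ccoth (cothArg c β φ) * ((Real.sinh β : ℂ) * sommerfeldWeight ω ρ β) := by
  have hW := sommerfeldWeight_integrable hω hρ
  have hS := sinh_mul_sommerfeldWeight_integrable hω hρ
  have i1 := (inv_sinh_sq_mul_integrable h hW).const_mul (1/4)
  have i2 := (ccoth_mul_integrable h hS).const_mul (Complex.I * ω * ρ)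
  have key := integral_eq_zero_of_hasDerivAt_of_integrable
    (f := fun β : ℝ => ccoth (cothArg c β φ) * sommerfeldWeight ω ρ β)
    (f' := fun β : ℝ => 1/4 * (-1 / Complex.sinh (cothArg c β φ) ^ 2 * sommerfeldWeight ω ρ β) +
      Complex.I * ω * ρ *
        (ccoth (cothArg c β φ) * ((Real.sinh β : ℂ) * sommerfeldWeight ω ρ β)))
    (fun β => by
      refine ((ccoth_cothArg_hasDerivAt_beta h).mul
        (sommerfeldWeight_hasDerivAt ω ρ β)).congr_deriv ?_
      ring)
    (i1.add i2) (ccoth_mul_integrable h hW)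
  rw [integral_add i1 i2, integral_const_mul, integral_const_mul] at key
  linear_combination 4 * key

/-- The claim for a single hyperbolic cotangent of the kernel, away from its poles. -/
lemma cothTerm_hasDerivAt_integral {ω : ℂ} (hω : 0 < ω.im) {ρ : ℝ} (hρ : 0 < ρ) {c φ₀ : ℝ}
    (h : Real.sin ((c - φ₀) / 4) ≠ 0) :
    HasDerivAt (fun φ : ℝ => ∫ β : ℝ, ccoth (cothArg c β φ) * sommerfeldWeight ω ρ β)
      (-ω * ρ * ∫ β : ℝ, ccoth (cothArg c β φ₀) * ((Real.sinh β : ℂ) * sommerfeldWeight ω ρ β))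
      φ₀ := by
  have hW := sommerfeldWeight_integrable hω hρ
  set s := Real.sin ((c - φ₀) / 4) ^ 2 / 2 with hs
  have hs0 : 0 < s := by positivity
  have hcont : ContinuousAt (fun φ : ℝ => Real.sin ((c - φ) / 4) ^ 2) φ₀ := by fun_prop
  have hU : {φ : ℝ | s < Real.sin ((c - φ) / 4) ^ 2} ∈ nhds φ₀ :=
    hcont.eventually (lt_mem_nhds (by rw [hs]; exact half_lt_self (by positivity)))
  have hne : ∀ φ : ℝ, s < Real.sin ((c - φ) / 4) ^ 2 → Real.sin ((c - φ) / 4) ≠ 0 := by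
    intro φ hφ h0
    rw [h0] at hφ
    norm_num at hφ
    linarith
  have main := hasDerivAt_integral_of_dominated_loc_of_deriv_le (μ := volume) (𝕜 := ℝ)
    (F := fun φ β : ℝ => ccoth (cothArg c β φ) * sommerfeldWeight ω ρ β)
    (F' := fun φ β : ℝ => -1 / Complex.sinh (cothArg c β φ) ^ 2 * (-Complex.I/4) *
      sommerfeldWeight ω ρ β)
    (bound := fun β => 1 / s * (1/4) * ‖sommerfeldWeight ω ρ β‖) hU
    (by
      filter_upwards [hU] with φ hφ
      exact (ccoth_mul_integrable (hne φ hφ) hW).aestronglyMeasurable)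
    (ccoth_mul_integrable h hW)
    (((continuous_inv_sinh_cothArg_sq h).mul continuous_const).mul
      (sommerfeldWeight_continuous ω ρ)).aestronglyMeasurable
    (ae_of_all _ fun β φ hφ => by
      rw [norm_mul, norm_mul]
      gcongr
      · exact norm_inv_sinh_cothArg_sq_le hs0 (le_of_lt hφ)
      · simp)
    (hW.norm.const_mul _)
    (ae_of_all _ fun β φ hφ => (ccoth_cothArg_hasDerivAt_phi (hne φ hφ)).mul_const _)
  have e : ∫ β : ℝ, -1 / Complex.sinh (cothArg c β φ₀) ^ 2 * (-Complex.I/4) *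
      sommerfeldWeight ω ρ β =
      (-Complex.I/4) * ∫ β : ℝ, -1 / Complex.sinh (cothArg c β φ₀) ^ 2 * sommerfeldWeight ω ρ β := by
    rw [← integral_const_mul]
    congr 1
    ext β
    ring
  refine main.2.congr_deriv (e.trans ?_)
  rw [integral_inv_sinh_sq_mul hω hρ h]
  linear_combination (ω * ρ * ∫ β : ℝ, ccoth (cothArg c β φ₀) *
    ((Real.sinh β : ℂ) * sommerfeldWeight ω ρ β)) * Complex.I_sq

/-! ### Assembling the kernel -/

lemma Zker_eq (α β φ : ℝ) :
    Zker α β φ = -ccoth (cothArg (π + α) β φ) + ccoth (cothArg (π - α) β φ)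
      + ccoth (cothArg (-π + α) β φ) - ccoth (cothArg (-π - α) β φ) := by
  have h1 : (1/4 : ℂ) * ((β : ℂ) + 2*(π : ℝ)*Complex.I - Complex.I * (φ : ℝ)
      - Complex.I * (π/2 : ℝ) - Complex.I * (π/2 : ℝ) + Complex.I * (α : ℝ)) =
      cothArg (π + α) β φ := by simp only [cothArg]; push_cast; ring
  have h2 : (1/4 : ℂ) * ((β : ℂ) + 2*(π : ℝ)*Complex.I - Complex.I * (φ : ℝ)
      - Complex.I * (π/2 : ℝ) - Complex.I * (π/2 : ℝ) - Complex.I * (α : ℝ)) =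
      cothArg (π - α) β φ := by simp only [cothArg]; push_cast; ring
  have h3 : (1/4 : ℂ) * ((β : ℂ) + 2*(π : ℝ)*Complex.I - Complex.I * (φ : ℝ)
      - Complex.I * (5*π/2 : ℝ) - Complex.I * (π/2 : ℝ) + Complex.I * (α : ℝ)) =
      cothArg (-π + α) β φ := by simp only [cothArg]; push_cast; ring
  have h4 : (1/4 : ℂ) * ((β : ℂ) + 2*(π : ℝ)*Complex.I - Complex.I * (φ : ℝ)
      - Complex.I * (5*π/2 : ℝ) - Complex.I * (π/2 : ℝ) - Complex.I * (α : ℝ)) =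
      cothArg (-π - α) β φ := by simp only [cothArg]; push_cast; ring
  rw [Zker, Zfun, Ufun, Ufun, h1, h2, h3, h4]
  ring

lemma integral_Zker_mul {α φ : ℝ} {f : ℝ → ℂ} (hf : Integrable f)
    (h1 : Real.sin ((π + α - φ) / 4) ≠ 0) (h2 : Real.sin ((π - α - φ) / 4) ≠ 0)
    (h3 : Real.sin ((-π + α - φ) / 4) ≠ 0) (h4 : Real.sin ((-π - α - φ) / 4) ≠ 0) :
    ∫ β : ℝ, Zker α β φ * f β =
      -(∫ β : ℝ, ccoth (cothArg (π + α) β φ) * f β) + (∫ β : ℝ, ccoth (cothArg (π - α) β φ) * f β)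
      + (∫ β : ℝ, ccoth (cothArg (-π + α) β φ) * f β)
      - ∫ β : ℝ, ccoth (cothArg (-π - α) β φ) * f β := by
  have i1 := ccoth_mul_integrable h1 hf
  have i2 := ccoth_mul_integrable h2 hf
  have i3 := ccoth_mul_integrable h3 hf
  have i4 := ccoth_mul_integrable h4 hf
  have j12 : Integrable fun β : ℝ => ccoth (cothArg (π - α) β φ) * f β -
      ccoth (cothArg (π + α) β φ) * f β := i2.sub i1
  have j123 : Integrable fun β : ℝ => ccoth (cothArg (π - α) β φ) * f β -
      ccoth (cothArg (π + α) β φ) * f β + ccoth (cothArg (-π + α) β φ) * f β := j12.add i3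
  have e : ∀ β : ℝ, Zker α β φ * f β = ccoth (cothArg (π - α) β φ) * f β -
      ccoth (cothArg (π + α) β φ) * f β + ccoth (cothArg (-π + α) β φ) * f β -
      ccoth (cothArg (-π - α) β φ) * f β := fun β => by rw [Zker_eq]; ring
  simp_rw [e]
  rw [integral_sub j123 i4, integral_add j12 i3, integral_sub i2 i1]
  ring

lemma sin_div_four_ne_zero {x : ℝ} (h1 : -(4 * π) < x) (h2 : x < 4 * π) (h0 : x ≠ 0) :
    Real.sin (x / 4) ≠ 0 := fun h =>
  h0 (by linarith [(Real.sin_eq_zero_iff_of_lt_of_lt (by linarith) (by linarith)).1 h])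

/-- Differentiability in `φ` of `A(ρ,φ) = ∫_ℝ 𝒵(β,φ) e^{iωρ cosh β} dβ` away from
`φ₊ = π + α`, `φ₋ = π − α`, with derivative given by the integration-by-parts formula
`∂_φ A = −ωρ ∫_ℝ 𝒵(β,φ) sinh β · e^{iωρ cosh β} dβ`. -/
theorem diffracted_integral_hasDerivAt_phi (α : ℝ) (hα : α ∈ Set.Ioo (π/2) π)
    (ω : ℂ) (hω : 0 < ω.im) (ρ : ℝ) (hρ : 0 < ρ)
    (φ₀ : ℝ) (hφ₀ : φ₀ ∈ Set.Ioo (0:ℝ) (2*π)) (hφp : φ₀ ≠ π + α) (hφm : φ₀ ≠ π - α) :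
    HasDerivAt
      (fun φ : ℝ => ∫ β : ℝ, Zker α β φ *
          Complex.exp (Complex.I * ω * (ρ : ℂ) * (Real.cosh β : ℂ)))
      (-ω * (ρ : ℂ) * ∫ β : ℝ, Zker α β φ₀ * (Real.sinh β : ℂ) *
          Complex.exp (Complex.I * ω * (ρ : ℂ) * (Real.cosh β : ℂ)))
      φ₀ := by
  obtain ⟨ha1, ha2⟩ := hα
  obtain ⟨hp1, hp2⟩ := hφ₀
  have hpi := Real.pi_pos
  have h1 : Real.sin ((π + α - φ₀) / 4) ≠ 0 :=
    sin_div_four_ne_zero (by linarith) (by linarith) (sub_ne_zero.2 hφp.symm)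
  have h2 : Real.sin ((π - α - φ₀) / 4) ≠ 0 :=
    sin_div_four_ne_zero (by linarith) (by linarith) (sub_ne_zero.2 hφm.symm)
  have h3 : Real.sin ((-π + α - φ₀) / 4) ≠ 0 :=
    sin_div_four_ne_zero (by linarith) (by linarith) (by linarith)
  have h4 : Real.sin ((-π - α - φ₀) / 4) ≠ 0 :=
    sin_div_four_ne_zero (by linarith) (by linarith) (by linarith)
  have hev : ∀ c : ℝ, Real.sin ((c - φ₀) / 4) ≠ 0 →
      ∀ᶠ φ in nhds φ₀, Real.sin ((c - φ) / 4) ≠ 0 := fun c hc =>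
    ContinuousAt.eventually_ne (by fun_prop) hc
  have hd := (((cothTerm_hasDerivAt_integral hω hρ h1).neg.add
    (cothTerm_hasDerivAt_integral hω hρ h2)).add
    (cothTerm_hasDerivAt_integral hω hρ h3)).sub (cothTerm_hasDerivAt_integral hω hρ h4)
  refine (hd.congr_of_eventuallyEq ?_).congr_deriv ?_
  · filter_upwards [hev _ h1, hev _ h2, hev _ h3, hev _ h4] with φ g1 g2 g3 g4
    exact integral_Zker_mul (sommerfeldWeight_integrable hω hρ) g1 g2 g3 g4
  · have e := integral_Zker_mul (sinh_mul_sommerfeldWeight_integrable hω hρ) h1 h2 h3 h4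
    simp_rw [mul_assoc (Zker _ _ _)]
    simp only [sommerfeldWeight] at e ⊢
    rw [e]
    ring
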